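/- Let K be a field of characteristic 0 and L a Lie algebra over K whose universal enveloping algebra U(L) is left Noetherian. Then every abelian Lie subalgebra of L is finite-dimensional. -/

import Mathlib

namespace PBWAux

section

set_option linter.unusedSectionVars false

variable {K L ι : Type*} [Field K] [LieRing L] [LieAlgebra K L] [LinearOrder ι]

/-- Monomials. -/
noncomputable abbrev z (K : Type*) [Field K] {ι : Type*} (s : Multiset ι) : Multiset ι →₀ K :=
  Finsupp.single s 1

/-- Bilinear extension of a function on basis elements. -/
noncomputable def mk (B : Module.Basis ι K L) (f : ι → Multiset ι → (Multiset ι →₀ K)) :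
    L →ₗ[K] (Multiset ι →₀ K) →ₗ[K] (Multiset ι →₀ K) :=
  B.constr K (fun i => Finsupp.linearCombination K (f i))

theorem mk_basis (B : Module.Basis ι K L) (f : ι → Multiset ι → (Multiset ι →₀ K))
    (i : ι) (s : Multiset ι) : mk B f (B i) (z K s) = f i s := by
  simp [mk]

/-- `j` is the least element of `s`, `t` the rest, and `j < i`. -/
def Dec (i : ι) (s : Multiset ι) (p : ι × Multiset ι) : Prop :=
  s = p.1 ::ₘ p.2 ∧ (∀ k ∈ p.2, p.1 ≤ k) ∧ p.1 < i

theorem Dec.unique {i : ι} {s : Multiset ι} {p q : ι × Multiset ι} (hp : Dec i s p)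
    (hq : Dec i s q) : p = q := by
  obtain ⟨j, t⟩ := p
  obtain ⟨k, u⟩ := q
  obtain ⟨h1, h2, -⟩ := hp
  obtain ⟨h3, h4, -⟩ := hq
  simp only at *
  have hjk : j = k := by
    apply le_antisymm
    · have : k ∈ j ::ₘ t := by rw [← h1, h3]; simp
      rcases Multiset.mem_cons.1 this with h | h
      · exact h.ge
      · exact h2 _ h
    · have : j ∈ k ::ₘ u := by rw [← h3, h1]; simp
      rcases Multiset.mem_cons.1 this with h | h
      · exact h.ge
      · exact h4 _ h
  subst hjk
  have := h1.symm.trans h3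
  rw [Multiset.cons_inj_right] at this
  rw [this]

theorem dec_or (i : ι) (s : Multiset ι) : (∃ p, Dec i s p) ∨ ((¬ ∃ p, Dec i s p) ∧ ∀ k ∈ s, i ≤ k) := by
  by_cases h : ∃ p, Dec i s p
  · exact Or.inl h
  refine Or.inr ⟨h, ?_⟩
  by_contra! hc
  obtain ⟨k, hk, hki⟩ := hc
  obtain ⟨j, hj, hmin⟩ := Finset.exists_min_image s.toFinset id ⟨k, by simpa using hk⟩
  simp only [Multiset.mem_toFinset, id] at hj hmin
  refine h ⟨(j, s.erase j), (Multiset.cons_erase hj).symm, ?_, (hmin k hk).trans_lt hki⟩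
  intro l hl
  exact hmin l (Multiset.mem_of_mem_erase hl)

theorem not_dec {i : ι} {s : Multiset ι} (h : ∀ k ∈ s, i ≤ k) : ¬ ∃ p, Dec i s p := by
  rintro ⟨⟨j, t⟩, h1, -, h3⟩
  exact absurd (h j (by rw [h1]; simp)) (not_le.2 h3)

open Classical in
/-- Fuelled recursion for the action. -/
noncomputable def F (B : Module.Basis ι K L) : ℕ → ι → Multiset ι → (Multiset ι →₀ K)
  | 0, i, s => z K (i ::ₘ s)
  | n + 1, i, s =>
    if h : ∃ p, Dec i s p then
      z K (i ::ₘ s) + mk B (F B n) (B h.choose.1) (F B n i h.choose.2 - z K (i ::ₘ h.choose.2))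
        + mk B (F B n) ⁅B i, B h.choose.1⁆ (z K h.choose.2)
    else z K (i ::ₘ s)

theorem F_min (B : Module.Basis ι K L) (n : ℕ) {i : ι} {s : Multiset ι}
    (h : ¬ ∃ p, Dec i s p) : F B n i s = z K (i ::ₘ s) := by
  cases n with
  | zero => rw [F]
  | succ n => rw [F, dif_neg h]

theorem F_dec (B : Module.Basis ι K L) (n : ℕ) {i : ι} {s : Multiset ι} {j : ι} {t : Multiset ι}
    (h : Dec i s (j, t)) : F B (n + 1) i s =
      z K (i ::ₘ s) + mk B (F B n) (B j) (F B n i t - z K (i ::ₘ t))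
        + mk B (F B n) ⁅B i, B j⁆ (z K t) := by
  have h' : ∃ p, Dec i s p := ⟨_, h⟩
  rw [F, dif_pos h', h'.choose_spec.unique h]

/-- Degree filtration. -/
noncomputable def D (K : Type*) [Field K] (ι : Type*) (n : ℕ) : Submodule K (Multiset ι →₀ K) :=
  Submodule.span K ((fun s => z K s) '' {s : Multiset ι | s.card ≤ n})

theorem z_mem_D {n : ℕ} {s : Multiset ι} (h : s.card ≤ n) : z K s ∈ D K ι n :=
  Submodule.subset_span ⟨s, h, rfl⟩

theorem D_mono {m n : ℕ} (h : m ≤ n) : D K ι m ≤ D K ι n :=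
  Submodule.span_mono (Set.image_mono fun _ hs => le_trans hs h)

theorem mk_mem (B : Module.Basis ι K L) (f : ι → Multiset ι → (Multiset ι →₀ K)) 
    (S : Set (Multiset ι)) (N : Submodule K (Multiset ι →₀ K))
    (hf : ∀ i, ∀ s ∈ S, f i s ∈ N) (x : L) {w : Multiset ι →₀ K}
    (hw : w ∈ Submodule.span K ((fun s => z K s) '' S)) : mk B f x w ∈ N := by
  induction hw using Submodule.span_induction with
  | mem w hw =>
    obtain ⟨s, hs, rfl⟩ := hw
    induction B.mem_span x using Submodule.span_induction with
    | mem x hx =>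
      obtain ⟨i, rfl⟩ := hx
      simp only [mk_basis]
      exact hf i s hs
    | zero => simp
    | add x y _ _ hx hy => simpa using N.add_mem hx hy
    | smul c x _ hx => simpa using N.smul_mem c hx
  | zero => simp
  | add x y _ _ hx hy => simpa using N.add_mem hx hy
  | smul c x _ hx => simpa using N.smul_mem c hx

theorem mk_congr (B : Module.Basis ι K L) (f g : ι → Multiset ι → (Multiset ι →₀ K)) 
    (S : Set (Multiset ι)) (hf : ∀ i, ∀ s ∈ S, f i s = g i s) (x : L) {w : Multiset ι →₀ K}
    (hw : w ∈ Submodule.span K ((fun s => z K s) '' S)) : mk B f x w = mk B g x w := by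
  have h : mk B f x w = mk B g x w + mk B (fun i s => f i s - g i s) x w := by
    have : mk B f = mk B g + mk B (fun i s => f i s - g i s) := by
      apply B.ext
      intro i
      apply Finsupp.lhom_ext'
      intro s
      apply LinearMap.ext_ring
      have h1 := mk_basis B f i s
      have h2 := mk_basis B g i s
      have h3 := mk_basis B (fun i s => f i s - g i s) i s
      simp only [z] at h1 h2 h3
      simp [h1, h2, h3]
    rw [this]; simp
  rw [h]
  have := mk_mem B (fun i s => f i s - g i s) S ⊥ (by
    intro i s hs; simp [hf i s hs]) x hw
  simpa using this

theorem F_lead (B : Module.Basis ι K L) (n : ℕ) : ∀ i s,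
    F B n i s - z K (i ::ₘ s) ∈ D K ι s.card := by
  induction n with
  | zero => intro i s; simp [F]
  | succ n ih =>
    intro i s
    rcases dec_or i s with ⟨⟨j, t⟩, h⟩ | ⟨h, -⟩
    · have hraise : ∀ x, ∀ w ∈ D K ι t.card, mk B (F B n) x w ∈ D K ι s.card := by
        intro x w hw
        refine mk_mem B (F B n) _ _ ?_ x hw
        intro k u hu
        have hs : s.card = t.card + 1 := by rw [h.1]; simp
        have hu' : u.card ≤ t.card := hu
        have := (D K ι s.card).add_mem (D_mono (by omega) (ih k u))
          (z_mem_D (K := K) (s := k ::ₘ u) (n := s.card) (by simp; omega))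
        simpa using this
      rw [F_dec B n h, add_assoc, add_sub_cancel_left]
      exact Submodule.add_mem _ (hraise _ _ (ih i t)) (hraise _ _ (z_mem_D le_rfl))
    · rw [F_min B _ h]; simp

theorem F_stable (B : Module.Basis ι K L) (n : ℕ) : ∀ i (s : Multiset ι), s.card ≤ n →
    F B n i s = F B (n + 1) i s := by
  induction n with
  | zero =>
    intro i s hs
    have : s = 0 := by simpa using hs
    subst this
    have h : ¬ ∃ p, Dec i 0 p := not_dec (by simp)
    rw [F_min B _ h, F_min B _ h]
  | succ n ih =>
    intro i s hs
    rcases dec_or i s with ⟨⟨j, t⟩, h⟩ | ⟨h, -⟩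
    · have ht : t.card ≤ n := by
        have : s.card = t.card + 1 := by rw [h.1]; simp
        omega
      rw [F_dec B n h, F_dec B (n + 1) h, ← ih i t ht]
      rw [mk_congr B (F B n) (F B (n + 1)) _ (fun i s hs => ih i s hs) (B j)
        (D_mono ht (F_lead B n i t))]
      rw [mk_congr B (F B n) (F B (n + 1)) _ (fun i s hs => ih i s hs) ⁅B i, B j⁆
        (z_mem_D ht)]
    · rw [F_min B _ h, F_min B _ h]

/-- The structure function of the action. -/
noncomputable def G (B : Module.Basis ι K L) (i : ι) (s : Multiset ι) : Multiset ι →₀ K :=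
  F B s.card i s

theorem F_eq_G (B : Module.Basis ι K L) {n : ℕ} (i : ι) {s : Multiset ι} (h : s.card ≤ n) :
    F B n i s = G B i s := by
  induction n, h using Nat.le_induction with
  | base => rfl
  | succ n hn ih => rw [← F_stable B n i s hn, ih]

/-- The action. -/
noncomputable def act (B : Module.Basis ι K L) :
    L →ₗ[K] (Multiset ι →₀ K) →ₗ[K] (Multiset ι →₀ K) := mk B (G B)

theorem act_min (B : Module.Basis ι K L) {i : ι} {s : Multiset ι} (h : ∀ k ∈ s, i ≤ k) :
    act B (B i) (z K s) = z K (i ::ₘ s) := by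
  rw [act, mk_basis, G, F_min B _ (not_dec h)]

theorem act_lead (B : Module.Basis ι K L) (i : ι) (s : Multiset ι) :
    act B (B i) (z K s) - z K (i ::ₘ s) ∈ D K ι s.card := by
  rw [act, mk_basis]; exact F_lead B _ i s

theorem act_dec (B : Module.Basis ι K L) {i j : ι} {t : Multiset ι} (h : ∀ k ∈ t, j ≤ k)
    (hij : j < i) : act B (B i) (z K (j ::ₘ t)) =
      act B (B j) (act B (B i) (z K t)) + act B ⁅B i, B j⁆ (z K t) := by
  have hd : Dec i (j ::ₘ t) (j, t) := ⟨rfl, h, hij⟩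
  have e1 : act B (B i) (z K (j ::ₘ t)) = F B (t.card + 1) i (j ::ₘ t) := by
    rw [act, mk_basis, F_eq_G B i (by simp)]
  have e2 : F B t.card i t = act B (B i) (z K t) := by
    rw [act, mk_basis]; rfl
  have e3 : act B (B j) (z K (i ::ₘ t)) = z K (i ::ₘ j ::ₘ t) := by
    rw [act_min, Multiset.cons_swap]
    intro k hk
    rcases Multiset.mem_cons.1 hk with rfl | hk
    · exact hij.le
    · exact h k hk
  rw [e1, F_dec B _ hd, e2,
    mk_congr B (F B t.card) (G B) _ (fun i s hs => F_eq_G B i hs) (B j) (act_lead B i t),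
    mk_congr B (F B t.card) (G B) _ (fun i s hs => F_eq_G B i hs) ⁅B i, B j⁆ (z_mem_D le_rfl)]
  change z K (i ::ₘ j ::ₘ t) + act B (B j) _ + act B _ _ = _
  rw [map_sub, e3]
  abel

/-- Commutation relation on one vector. -/
def Comm (B : Module.Basis ι K L) (x y : L) (w : Multiset ι →₀ K) : Prop :=
  act B x (act B y w) - act B y (act B x w) = act B ⁅x, y⁆ w

theorem Comm.symm {B : Module.Basis ι K L} {x y : L} {w : Multiset ι →₀ K} (h : Comm B x y w) :
    Comm B y x w := by
  unfold Comm at *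
  rw [← lie_skew, map_neg, LinearMap.neg_apply, ← h]
  abel

theorem comm_vec (B : Module.Basis ι K L) (x y : L) {S : Set (Multiset ι)}
    (hf : ∀ s ∈ S, Comm B x y (z K s)) {w : Multiset ι →₀ K}
    (hw : w ∈ Submodule.span K ((fun s => z K s) '' S)) : Comm B x y w := by
  have : Submodule.span K ((fun s => z K s) '' S) ≤
      LinearMap.ker (act B x ∘ₗ act B y - act B y ∘ₗ act B x - act B ⁅x, y⁆) := by
    rw [Submodule.span_le]
    rintro _ ⟨s, hs, rfl⟩
    have := hf s hs
    unfold Comm at this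
    simp [this]
  have h := this hw
  simp only [LinearMap.mem_ker, LinearMap.sub_apply, LinearMap.comp_apply] at h
  exact sub_eq_zero.1 h

theorem comm_lie (B : Module.Basis ι K L) {w : Multiset ι →₀ K}
    (h : ∀ i j, Comm B (B i) (B j) w) (x y : L) : Comm B x y w := by
  unfold Comm at *
  induction B.mem_span x using Submodule.span_induction with
  | mem x hx =>
    obtain ⟨i, rfl⟩ := hx
    induction B.mem_span y using Submodule.span_induction with
    | mem y hy => obtain ⟨j, rfl⟩ := hy; exact h i j
    | zero => simp
    | add x y _ _ hx hy => simp only [map_add, lie_add, LinearMap.add_apply, ← hx, ← hy]; abel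
    | smul c x _ hx => simp only [map_smul, lie_smul, LinearMap.smul_apply, ← hx, smul_sub]
  | zero => simp
  | add x y _ _ hx hy => simp only [map_add, add_lie, LinearMap.add_apply, ← hx, ← hy]; abel
  | smul c x _ hx => simp only [map_smul, smul_lie, LinearMap.smul_apply, ← hx, smul_sub]

theorem comm_min (B : Module.Basis ι K L) {i j : ι} {s : Multiset ι} (h : ∀ k ∈ s, j ≤ k)
    (hij : j < i) : Comm B (B i) (B j) (z K s) := by
  unfold Comm
  rw [act_min B h, act_dec B h hij]
  abel

theorem comm_all (B : Module.Basis ι K L) (n : ℕ) : ∀ (s : Multiset ι), s.card ≤ n → ∀ i j,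
    Comm B (B i) (B j) (z K s) := by
  induction n with
  | zero =>
    intro s hs i j
    have : s = 0 := by simpa using hs
    subst this
    rcases lt_trichotomy i j with h | h | h
    · exact (comm_min B (by simp) h).symm
    · subst h; simp [Comm]
    · exact comm_min B (by simp) h
  | succ n ih =>
    have key : ∀ (s : Multiset ι), s.card ≤ n + 1 → ∀ i j, j < i →
        Comm B (B i) (B j) (z K s) := by
      intro s hs i j hij
      rcases dec_or j s with ⟨⟨k, t⟩, h1, h2, h3⟩ | ⟨-, h⟩
      swap
      · exact comm_min B h hij
      simp only at h1 h2 h3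
      subst h1
      have ht : t.card ≤ n := by simpa using hs
      have IH : ∀ x y : L, ∀ w ∈ D K ι t.card, Comm B x y w := fun x y w hw =>
        comm_vec B x y (fun s hs => comm_lie B (ih s (le_trans hs ht)) x y) hw
      have hk : ∀ p q, k < p → k < q → Comm B (B p) (B k) (act B (B q) (z K t)) := by
        intro p q hp hq
        have a1 : Comm B (B p) (B k) (z K (q ::ₘ t)) := by
          refine comm_min B ?_ hp
          intro l hl
          rcases Multiset.mem_cons.1 hl with rfl | hl
          · exact hq.le
          · exact h2 l hl
        have a2 := IH (B p) (B k) _ (act_lead B q t)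
        unfold Comm at *
        simp only [map_sub] at a2
        linear_combination (norm := module) a1 + a2
      have hz := z_mem_D (K := K) (s := t) le_rfl
      have c1 := hk i j (h3.trans hij) h3
      have c2 := hk j i h3 (h3.trans hij)
      have c3 := IH (B i) ⁅B j, B k⁆ _ hz
      have c4 := IH (B j) ⁅B i, B k⁆ _ hz
      have c5 := IH (B i) (B j) _ hz
      have c6 := IH ⁅B i, B j⁆ (B k) _ hz
      have d1 := act_dec B h2 h3
      have d2 := act_dec B h2 (h3.trans hij)
      have d3 := act_min B h2
      have jac : ⁅B i, ⁅B j, B k⁆⁆ - ⁅B j, ⁅B i, B k⁆⁆ = ⁅⁅B i, B j⁆, B k⁆ := by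
        rw [leibniz_lie (B i)]; abel
      have jac' := congrArg (fun y => act B y (z K t)) jac
      have c5' := congrArg (act B (B k)) c5
      unfold Comm at *
      rw [d1, d2]
      rw [← d3]
      simp only [map_sub, map_add, LinearMap.sub_apply] at *
      linear_combination (norm := module) c1 - c2 + c3 - c4 + c5' - c6 + jac'
    intro s hs i j
    rcases lt_trichotomy i j with h | h | h
    · exact (key s hs j i h).symm
    · subst h; simp [Comm]
    · exact key s hs i j h

theorem comm (B : Module.Basis ι K L) (x y : L) (w : Multiset ι →₀ K) : Comm B x y w := by
  refine comm_vec B x y (S := Set.univ)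
    (fun s _ => comm_lie B (comm_all B s.card s le_rfl) x y) ?_
  have : w = w.sum fun s c => c • z K s := by simp
  rw [this]
  exact Submodule.sum_mem _ fun s _ => Submodule.smul_mem _ _ (Submodule.subset_span ⟨s, trivial, rfl⟩)

/-- Monomials involving an index satisfying `P`. -/
noncomputable def N (K : Type*) [Field K] {ι : Type*} (P : ι → Prop) :
    Submodule K (Multiset ι →₀ K) :=
  Submodule.span K ((fun s => z K s) '' {s : Multiset ι | ∃ k ∈ s, P k})

theorem act_one (B : Module.Basis ι K L) (x : L) :
    act B x (z K 0) = Finsupp.linearCombination K (fun i => z K {i}) (B.repr x) := by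
  conv_lhs => rw [← B.linearCombination_repr x]
  rw [Finsupp.linearCombination_apply, Finsupp.linearCombination_apply]
  simp only [Finsupp.sum, map_sum, map_smul, LinearMap.sum_apply, LinearMap.smul_apply]
  refine Finset.sum_congr rfl fun i _ => ?_
  rw [act_min B (by simp)]
  rfl

theorem mkF_one (B : Module.Basis ι K L) (n : ℕ) (x : L) :
    mk B (F B n) x (z K 0) = act B x (z K 0) := by
  refine mk_congr B _ _ {0} ?_ x (Submodule.subset_span ⟨0, rfl, rfl⟩)
  rintro i s rfl
  exact F_eq_G B i (by simp)

theorem act_one_mem (B : Module.Basis ι K L) (P : ι → Prop) {x : L}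
    (hx : x ∈ Submodule.span K (B '' {i | P i})) : act B x (z K 0) ∈ N K P := by
  induction hx using Submodule.span_induction with
  | mem x hx =>
    obtain ⟨i, hi, rfl⟩ := hx
    rw [act_min B (by simp)]
    exact Submodule.subset_span ⟨_, ⟨i, by simp, hi⟩, rfl⟩
  | zero => simp
  | add x y _ _ hx hy => simpa using (N K P).add_mem hx hy
  | smul c x _ hx => simpa using (N K P).smul_mem c hx

theorem F_N (B : Module.Basis ι K L) (P : ι → Prop) (hP : ∀ i j, P i → i ≤ j → P j)
    (hb : ∀ i j, P i → P j → ⁅B i, B j⁆ ∈ Submodule.span K (B '' {i | P i})) (n : ℕ) :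
    ∀ i (s : Multiset ι), (∃ k ∈ s, P k) → F B n i s ∈ N K P := by
  have hz : ∀ s : Multiset ι, (∃ k ∈ s, P k) → z K s ∈ N K P := fun s hs =>
    Submodule.subset_span ⟨_, hs, rfl⟩
  have hc : ∀ i (s : Multiset ι), (∃ k ∈ s, P k) → ∃ k ∈ i ::ₘ s, P k := by
    rintro i s ⟨k, hk, hk'⟩
    exact ⟨k, Multiset.mem_cons_of_mem hk, hk'⟩
  induction n with
  | zero => intro i s hs; rw [F]; exact hz _ (hc i s hs)
  | succ n ih =>
    intro i s hs
    rcases dec_or i s with ⟨⟨j, t⟩, h⟩ | ⟨h, -⟩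
    swap
    · rw [F_min B _ h]; exact hz _ (hc i s hs)
    rw [F_dec B n h]
    obtain ⟨h1, h2, h3⟩ := h
    simp only at h1 h2 h3
    have hm : ∀ x, ∀ w ∈ N K P, mk B (F B n) x w ∈ N K P := fun x w hw =>
      mk_mem B _ _ _ (fun i s hs => ih i s hs) x hw
    rw [add_assoc]
    refine Submodule.add_mem _ (hz _ (hc i s hs)) ?_
    by_cases ht : ∃ k ∈ t, P k
    · exact Submodule.add_mem _
        (hm _ _ (Submodule.sub_mem _ (ih i t ht) (hz _ (hc i t ht)))) (hm _ _ (hz t ht))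
    · have hj : P j := by
        obtain ⟨k, hk, hk'⟩ := hs
        rw [h1] at hk
        rcases Multiset.mem_cons.1 hk with rfl | hk
        · exact hk'
        · exact absurd ⟨k, hk, hk'⟩ ht
      have ht0 : t = 0 := by
        rw [Multiset.eq_zero_iff_forall_notMem]
        intro k hk
        exact ht ⟨k, hk, hP j k hj (h2 k hk)⟩
      subst ht0
      rw [F_min B n (not_dec (by simp)), sub_self, map_zero, zero_add, mkF_one]
      exact act_one_mem B P (hb i j (hP j i hj h3.le) hj)

theorem act_N (B : Module.Basis ι K L) (P : ι → Prop) (hP : ∀ i j, P i → i ≤ j → P j)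
    (hb : ∀ i j, P i → P j → ⁅B i, B j⁆ ∈ Submodule.span K (B '' {i | P i})) (x : L)
    {w : Multiset ι →₀ K} (hw : w ∈ N K P) : act B x w ∈ N K P :=
  mk_mem B _ _ _ (fun i s hs => F_N B P hP hb _ i s hs) x hw

theorem mem_of_act_one (B : Module.Basis ι K L) (P : ι → Prop) {x : L}
    (h : act B x (z K 0) ∈ N K P) : x ∈ Submodule.span K (B '' {i | P i}) := by
  rw [B.mem_span_image]
  intro i hi
  by_contra hPi
  have hker : N K P ≤ LinearMap.ker (Finsupp.lapply {i} : (Multiset ι →₀ K) →ₗ[K] K) := by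
    rw [N, Submodule.span_le]
    rintro _ ⟨s, ⟨k, hk, hk'⟩, rfl⟩
    have : s ≠ {i} := by
      rintro rfl
      rw [Multiset.mem_singleton] at hk
      subst hk
      exact hPi hk'
    simp [z, this]
  have := hker h
  rw [act_one, LinearMap.mem_ker, Finsupp.linearCombination_apply, Finsupp.sum, map_sum] at this
  simp [Finsupp.single_apply] at this
  simp at hi
  exact hi this

attribute [local instance] LieRing.ofAssociativeRing

/-- The action as a Lie algebra homomorphism. -/
noncomputable def actHom (B : Module.Basis ι K L) :
    L →ₗ⁅K⁆ Module.End K (Multiset ι →₀ K) :=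
  { act B with
    map_lie' := by
      intro x y
      apply LinearMap.ext
      intro w
      exact Eq.symm (comm B x y w) }

theorem mem_of_ideal_basis (B : Module.Basis ι K L) (P : ι → Prop)
    (hP : ∀ i j, P i → i ≤ j → P j)
    (hb : ∀ i j, P i → P j → ⁅B i, B j⁆ ∈ Submodule.span K (B '' {i | P i})) (x : L)
    (hx : UniversalEnvelopingAlgebra.ι K x ∈ Ideal.span
      (UniversalEnvelopingAlgebra.ι K '' (Submodule.span K (B '' {i | P i}) : Set L))) :
    x ∈ Submodule.span K (B '' {i | P i}) := by
  let Φ := UniversalEnvelopingAlgebra.lift K (actHom B)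
  have hΦ : ∀ y w, Φ (UniversalEnvelopingAlgebra.ι K y) w = act B y w := by
    intro y w
    have : Φ (UniversalEnvelopingAlgebra.ι K y) = actHom B y :=
      UniversalEnvelopingAlgebra.lift_ι_apply K (actHom B) y
    rw [this]; rfl
  have hall : ∀ u, ∀ w ∈ N K P, Φ u w ∈ N K P := by
    intro u
    obtain ⟨t, rfl⟩ : ∃ t, UniversalEnvelopingAlgebra.mkAlgHom K L t = u :=
      Quotient.exists_rep u
    induction t using TensorAlgebra.induction with
    | algebraMap c =>
      intro w hw
      rw [AlgHom.commutes, AlgHom.commutes]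
      exact (N K P).smul_mem c hw
    | ι y =>
      intro w hw
      have h := hΦ y w
      rw [UniversalEnvelopingAlgebra.ι_apply] at h
      rw [h]
      exact act_N B P hP hb y hw
    | mul p q hp hq =>
      intro w hw
      rw [map_mul, map_mul]
      exact hp _ (hq w hw)
    | add p q hp hq =>
      intro w hw
      rw [map_add, map_add]
      exact (N K P).add_mem (hp w hw) (hq w hw)
  apply mem_of_act_one B P
  rw [← hΦ]
  generalize UniversalEnvelopingAlgebra.ι K x = u₀ at hx
  induction hx using Submodule.span_induction with
  | mem u hu =>
    obtain ⟨y, hy, rfl⟩ := hu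
    rw [hΦ]; exact act_one_mem B P hy
  | zero => simp
  | add u v _ _ hu hv => simpa using (N K P).add_mem hu hv
  | smul c u _ hu =>
    rw [smul_eq_mul, map_mul]
    exact hall c _ hu

end

theorem mem_of_ideal {K L : Type*} [Field K] [LieRing L] [LieAlgebra K L] (b : Submodule K L)
    (hb : ∀ x ∈ b, ∀ y ∈ b, ⁅x, y⁆ ∈ b) (x : L)
    (hx : UniversalEnvelopingAlgebra.ι K x ∈ Ideal.span
      (UniversalEnvelopingAlgebra.ι K '' (b : Set L))) : x ∈ b := by
  classical
  obtain ⟨q, hq⟩ := b.exists_isCompl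
  let B1 := Module.Basis.ofVectorSpace K q
  let B2 := Module.Basis.ofVectorSpace K b
  let : LinearOrder (Module.Basis.ofVectorSpaceIndex K q) := linearOrderOfSTO WellOrderingRel
  let : LinearOrder (Module.Basis.ofVectorSpaceIndex K b) := linearOrderOfSTO WellOrderingRel
  let B := ((B1.prod B2).map (Submodule.prodEquivOfIsCompl q b hq.symm)).reindex
    (toLex (α := Module.Basis.ofVectorSpaceIndex K q ⊕ Module.Basis.ofVectorSpaceIndex K b))
  let P : Module.Basis.ofVectorSpaceIndex K q ⊕ₗ Module.Basis.ofVectorSpaceIndex K b → Prop :=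
    fun i => ∃ k, i = toLex (Sum.inr k)
  have hBr : ∀ k, B (toLex (Sum.inr k)) = (B2 k : L) := by
    intro k
    simp [B]
  have hspan : Submodule.span K (B '' {i | P i}) = b := by
    have h1 : B '' {i | P i} = b.subtype '' (Set.range B2) := by
      ext y
      constructor
      · rintro ⟨_, ⟨k, rfl⟩, rfl⟩
        exact ⟨B2 k, ⟨k, rfl⟩, (hBr k).symm⟩
      · rintro ⟨_, ⟨k, rfl⟩, rfl⟩
        exact ⟨_, ⟨k, rfl⟩, hBr k⟩
    rw [h1, Submodule.span_image, B2.span_eq, Submodule.map_top, Submodule.range_subtype]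
  have hP : ∀ i j, P i → i ≤ j → P j := by
    rintro _ j ⟨k, rfl⟩ hle
    obtain ⟨j, rfl⟩ := toLex.surjective j
    rcases j with j | j
    · exact absurd hle Sum.Lex.not_inr_le_inl
    · exact ⟨j, rfl⟩
  have := mem_of_ideal_basis B P hP (by
    rintro _ _ ⟨k, rfl⟩ ⟨l, rfl⟩
    rw [hspan, hBr, hBr]
    exact hb _ (B2 k).2 _ (B2 l).2) x (by rw [hspan]; exact hx)
  rwa [hspan] at this

end PBWAux

/-- If `U(L)` is left Noetherian (over a field of characteristic zero), then every
abelian Lie subalgebra of `L` is finite-dimensional. -/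
theorem finiteDimensional_abelian_subalgebra_of_noetherian_uea
    (K : Type*) [Field K] [CharZero K]
    (L : Type*) [LieRing L] [LieAlgebra K L]
    (hNoeth : IsNoetherianRing (UniversalEnvelopingAlgebra K L))
    (a : LieSubalgebra K L) (hab : IsLieAbelian a) :
    FiniteDimensional K a := by
  let b : Submodule K a → Submodule K L := fun p => p.map (a.toSubmodule.subtype)
  let f : Submodule K a → Ideal (UniversalEnvelopingAlgebra K L) := fun p =>
    Ideal.span (UniversalEnvelopingAlgebra.ι K '' (b p : Set L))
  have hmono : Monotone f := fun p q h =>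
    Ideal.span_mono (Set.image_mono (Submodule.map_mono h))
  have hinj : Function.Injective f := by
    have key : ∀ p q, f p ≤ f q → p ≤ q := by
      intro p q h x hx
      have h1 : UniversalEnvelopingAlgebra.ι K (x : L) ∈ f p :=
        Ideal.subset_span ⟨x, ⟨x, hx, rfl⟩, rfl⟩
      have h2 := PBWAux.mem_of_ideal (b q) (by
        rintro _ ⟨y, hy, rfl⟩ _ ⟨y', hy', rfl⟩
        change a at y y'
        have h0 : ⁅y, y'⁆ = 0 := hab.trivial y y'
        have h0' : ⁅(y : L), (y' : L)⁆ = 0 := by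
          rw [← LieSubalgebra.coe_bracket, h0]; rfl
        change ⁅(y : L), (y' : L)⁆ ∈ b q
        rw [h0']
        exact (b q).zero_mem) x (h h1)
      obtain ⟨y, hy, hyx⟩ := h2
      have : y = x := Subtype.ext hyx
      exact this ▸ hy
    intro p q h
    exact le_antisymm (key p q h.le) (key q p h.ge)
  have hs : StrictMono f := hmono.strictMono_of_injective hinj
  have hwf : WellFoundedGT (Ideal (UniversalEnvelopingAlgebra K L)) :=
    (isNoetherian_iff'.1 hNoeth)
  have : WellFoundedGT (Submodule K a) := hs.wellFoundedGT
  have hN : IsNoetherian K a := isNoetherian_iff'.2 this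
  infer_instance
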